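/- For every r > 2 and every δ > 0 there is a constant C (depending only on r and δ) such that the following holds. Let N ≥ 1 and let ξ_1 < ... < ξ_N be real numbers with ξ_j − ξ_{j−1} ≥ δ for all 2 ≤ j ≤ N, and let (c_k)_{k=1}^∞ be a sequence in ℂ^N. Then ‖ sup_k |∑_{j=1}^N c_{k,j} e^{2πi ξ_j y}| ‖_{L²_y([0,1])} ≤ C N^{1/2 − 1/r} ‖c_k‖_{V^r_k(ℓ²(ℂ^N))}. -/

import Mathlib

/-!
The proof combines chaining in `ℓ²(ℂ^N)` with almost orthogonality of the exponentials.

*Almost orthogonality* (`lintegral_sq_trigSum_le`): the indicator of `[0, 1]` is at most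
`e^π e^{-πy²}`, and against this weight the exponentials with frequencies `ξ_j` have Gram matrix
`e^π e^{-π(ξ_j - ξ_k)²}`. Separation of the frequencies bounds its row sums by a constant depending
only on `δ`, so Schur's test gives `‖∑ a_j e^{2πi ξ_j y}‖_{L²[0,1]} ≲ ‖a‖`.

*Entropy* (`exists_net`): if `W` bounds the variation norm, then any `λ`-separated set of values
`c_k` has at most `1 + (W/λ)^r` elements, because its points, taken in increasing order of `k`, make
jumps larger than `λ`. Hence for each `n` there is a `2⁻ⁿ W`-net of at most `2 · 2^{nr}` values.

*Chaining* (`exists_net_maxFun_le`, `L2norm_iSup_le`): passing from the net of scale `2⁻ⁿ⁺¹` to that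
of scale `2⁻ⁿ` involves at most `2 · 2^{nr}` differences of size `≲ 2⁻ⁿ W`. Replacing their supremum
by an `ℓ²` sum and using almost orthogonality, it costs `≲ 2^{n(r/2-1)} W` in `L²`. As `r > 2`, the
sum over `n ≤ S` is dominated by its last term `2^{S(r/2-1)} W`. The remaining error is at most
`√N 2⁻ˢ W` by the pointwise Cauchy–Schwarz inequality. Taking `2ˢ ≈ N^{1/r}` makes both of size
`N^{1/2-1/r} W`.
-/

open MeasureTheory Complex Set Real
open scoped ENNReal NNReal

/-- The `r`-variation seminorm of `g` over index set `K`. -/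
noncomputable def vSemi {ι E : Type*} [LinearOrder ι] [NormedAddCommGroup E]
    (r : ℝ) (K : Set ι) (g : ι → E) : ℝ≥0∞ :=
  ⨆ (M : ℕ) (u : Fin (M + 1) → ι) (_ : StrictMono u) (_ : ∀ i, u i ∈ K),
    (∑ j : Fin M, (‖g (u j.succ) - g (u j.castSucc)‖₊ : ℝ≥0∞) ^ r) ^ (1 / r)

/-- The `r`-variation norm: `sup_{k ∈ K} ‖g k‖ + ‖g‖_{Ṽ^r}`. -/
noncomputable def vNorm {ι E : Type*} [LinearOrder ι] [NormedAddCommGroup E]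
    (r : ℝ) (K : Set ι) (g : ι → E) : ℝ≥0∞ :=
  (⨆ k ∈ K, (‖g k‖₊ : ℝ≥0∞)) + vSemi r K g

/-! ### Almost orthogonality of separated exponentials -/

/-- The trigonometric sum `y ↦ ∑ j, a j * e^{2πi ξ_j y}` with frequencies `ξ` and coefficients
`a`. -/
noncomputable def trigSum {N : ℕ} (ξ : Fin N → ℝ) (a : EuclideanSpace ℂ (Fin N)) (y : ℝ) : ℂ :=
  ∑ j, a j * Complex.exp (2 * (π : ℂ) * Complex.I * (ξ j : ℂ) * (y : ℂ))

lemma continuous_trigSum {N : ℕ} (ξ : Fin N → ℝ) (a : EuclideanSpace ℂ (Fin N)) :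
    Continuous (trigSum ξ a) := by
  unfold trigSum
  fun_prop

lemma trigSum_sub {N : ℕ} (ξ : Fin N → ℝ) (a b : EuclideanSpace ℂ (Fin N)) (y : ℝ) :
    trigSum ξ (a - b) y = trigSum ξ a y - trigSum ξ b y := by
  simp [trigSum, sub_mul, Finset.sum_sub_distrib]

lemma norm_trigSum_le {N : ℕ} (ξ : Fin N → ℝ) (a : EuclideanSpace ℂ (Fin N)) (y : ℝ) :
    ‖trigSum ξ a y‖ ≤ √N * ‖a‖ := by
  have h1 : ‖trigSum ξ a y‖ ≤ ∑ j, ‖a j‖ := by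
    refine (norm_sum_le _ _).trans (Finset.sum_le_sum fun j _ => ?_)
    have : (2 * (π : ℂ) * Complex.I * (ξ j : ℂ) * (y : ℂ)) =
        ((2 * π * ξ j * y : ℝ) : ℂ) * Complex.I := by push_cast; ring
    rw [norm_mul, this, Complex.norm_exp_ofReal_mul_I, mul_one]
  refine h1.trans (le_of_sq_le_sq ?_ (by positivity))
  rw [mul_pow, Real.sq_sqrt (Nat.cast_nonneg _), EuclideanSpace.norm_sq_eq]
  simpa using sq_sum_le_card_mul_sum_sq (s := Finset.univ) (f := fun j => ‖a j‖)

lemma separation_of_le {N : ℕ} {δ : ℝ} {ξ : Fin N → ℝ}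
    (hξ : ∀ j : Fin N, ∀ h : (j : ℕ) + 1 < N, δ ≤ ξ ⟨(j : ℕ) + 1, h⟩ - ξ j)
    (j : Fin N) (m : ℕ) (h : (j : ℕ) + m < N) :
    δ * m ≤ ξ ⟨(j : ℕ) + m, h⟩ - ξ j := by
  induction m with
  | zero => simp
  | succ m ih =>
    have h1 := ih (by omega)
    have h2 := hξ ⟨(j : ℕ) + m, by omega⟩ (by simpa [add_assoc] using h)
    simp only [add_assoc] at h2
    push_cast
    linarith

lemma separation {N : ℕ} {δ : ℝ} (hδ : 0 < δ) {ξ : Fin N → ℝ}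
    (hξ : ∀ j : Fin N, ∀ h : (j : ℕ) + 1 < N, δ ≤ ξ ⟨(j : ℕ) + 1, h⟩ - ξ j) (j k : Fin N) :
    δ ^ 2 * (((j : ℕ) : ℤ) - ((k : ℕ) : ℤ)).natAbs ≤ (ξ j - ξ k) ^ 2 := by
  wlog hjk : (j : ℕ) ≤ k generalizing j k
  · have := this k j (by omega)
    rw [← Int.natAbs_neg, neg_sub]
    nlinarith
  obtain ⟨m, hm⟩ := Nat.exists_eq_add_of_le hjk
  have hlt : (j : ℕ) + m < N := by omega
  have hk : k = ⟨(j : ℕ) + m, hlt⟩ := Fin.ext hm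
  have h := separation_of_le hξ j m hlt
  rw [← hk] at h
  have e : (((j : ℕ) : ℤ) - ((k : ℕ) : ℤ)).natAbs = m := by omega
  rw [e]
  have hm1 : (m : ℝ) ≤ (m : ℝ) ^ 2 := by exact_mod_cast Nat.le_self_pow (by norm_num) m
  have h0 : 0 ≤ δ * m := by positivity
  nlinarith [sq_nonneg δ, mul_le_mul_of_nonneg_left hm1 (sq_nonneg δ)]

/-- The sum of `q ^ |n|` over all integers `n`, with `q = e^{-πδ²}`: it bounds the row sums of the
Gaussian Gram matrix of `δ`-separated exponentials. -/
noncomputable def gaussTail (δ : ℝ) : ℝ := ∑' n : ℤ, Real.exp (-π * δ ^ 2) ^ n.natAbs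

lemma summable_gaussTail {δ : ℝ} (hδ : 0 < δ) :
    Summable fun n : ℤ => Real.exp (-π * δ ^ 2) ^ n.natAbs := by
  have h : Summable fun n : ℕ => Real.exp (-π * δ ^ 2) ^ n := by
    refine summable_geometric_of_lt_one (Real.exp_pos _).le (Real.exp_lt_one_iff.2 ?_)
    have := Real.pi_pos
    nlinarith [mul_pos this (pow_pos hδ 2)]
  exact Summable.of_nat_of_neg (by simpa using h) (by simpa using h)

lemma gaussTail_nonneg (δ : ℝ) : 0 ≤ gaussTail δ := tsum_nonneg fun n => by positivity

lemma gram_row_sum_le {N : ℕ} {δ : ℝ} (hδ : 0 < δ) {ξ : Fin N → ℝ}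
    (hξ : ∀ j : Fin N, ∀ h : (j : ℕ) + 1 < N, δ ≤ ξ ⟨(j : ℕ) + 1, h⟩ - ξ j) (j : Fin N) :
    ∑ k, Real.exp (-π * (ξ j - ξ k) ^ 2) ≤ gaussTail δ := by
  have hinj : Function.Injective fun k : Fin N => (((j : ℕ) : ℤ) - ((k : ℕ) : ℤ)) := by
    intro k l h
    simp only at h
    exact Fin.ext (by omega)
  calc ∑ k, Real.exp (-π * (ξ j - ξ k) ^ 2)
      ≤ ∑ k : Fin N, Real.exp (-π * δ ^ 2) ^ (((j : ℕ) : ℤ) - ((k : ℕ) : ℤ)).natAbs := by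
        refine Finset.sum_le_sum fun k _ => ?_
        rw [← Real.exp_nat_mul, Real.exp_le_exp]
        have := mul_le_mul_of_nonneg_left (separation hδ hξ j k) Real.pi_pos.le
        linarith
    _ = ∑ n ∈ Finset.univ.map ⟨_, hinj⟩, Real.exp (-π * δ ^ 2) ^ n.natAbs := by simp
    _ ≤ gaussTail δ :=
        (summable_gaussTail hδ).sum_le_tsum _ fun n _ => by positivity

/-- Schur's test for the Gaussian Gram matrix. -/
lemma gram_form_le {N : ℕ} {δ : ℝ} (hδ : 0 < δ) {ξ : Fin N → ℝ}
    (hξ : ∀ j : Fin N, ∀ h : (j : ℕ) + 1 < N, δ ≤ ξ ⟨(j : ℕ) + 1, h⟩ - ξ j)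
    (a : EuclideanSpace ℂ (Fin N)) :
    ∑ j, ∑ k, ‖a j‖ * ‖a k‖ * Real.exp (-π * (ξ j - ξ k) ^ 2) ≤ gaussTail δ * ‖a‖ ^ 2 := by
  have h1 : ∑ j, ∑ k, ‖a j‖ ^ 2 * Real.exp (-π * (ξ j - ξ k) ^ 2) ≤ gaussTail δ * ‖a‖ ^ 2 := by
    rw [EuclideanSpace.norm_sq_eq, Finset.mul_sum]
    refine Finset.sum_le_sum fun j _ => ?_
    rw [← Finset.mul_sum, mul_comm]
    exact mul_le_mul_of_nonneg_right (gram_row_sum_le hδ hξ j) (sq_nonneg _)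
  have h2 : ∑ j, ∑ k, ‖a k‖ ^ 2 * Real.exp (-π * (ξ j - ξ k) ^ 2) =
      ∑ j, ∑ k, ‖a j‖ ^ 2 * Real.exp (-π * (ξ j - ξ k) ^ 2) := by
    rw [Finset.sum_comm]
    refine Finset.sum_congr rfl fun j _ => Finset.sum_congr rfl fun k _ => ?_
    rw [← neg_sub (ξ j) (ξ k), neg_sq]
  have h3 : ∑ j, ∑ k, ‖a j‖ * ‖a k‖ * Real.exp (-π * (ξ j - ξ k) ^ 2) ≤
      ∑ j, ∑ k, (‖a j‖ ^ 2 * Real.exp (-π * (ξ j - ξ k) ^ 2) +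
        ‖a k‖ ^ 2 * Real.exp (-π * (ξ j - ξ k) ^ 2)) / 2 := by
    refine Finset.sum_le_sum fun j _ => Finset.sum_le_sum fun k _ => ?_
    nlinarith [mul_nonneg (sq_nonneg (‖a j‖ - ‖a k‖)) (Real.exp_pos (-π * (ξ j - ξ k) ^ 2)).le]
  simp only [← Finset.sum_div, Finset.sum_add_distrib, h2] at h3
  linarith

/-- The Gaussian-weighted square of a trigonometric sum, expanded so that each term is a
Gaussian-weighted exponential. -/
lemma gauss_mul_sq_trigSum {N : ℕ} (ξ : Fin N → ℝ) (a : EuclideanSpace ℂ (Fin N)) (y : ℝ) :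
    ((Real.exp (-π * y ^ 2) * ‖trigSum ξ a y‖ ^ 2 : ℝ) : ℂ) =
      ∑ j, ∑ k, (a j * (starRingEnd ℂ) (a k)) *
        (Complex.exp (Complex.I * ((2 * π * (ξ j - ξ k) : ℝ) : ℂ) * y) *
          Complex.exp (-(π : ℂ) * (y : ℂ) ^ 2)) := by
  have h : ((‖trigSum ξ a y‖ ^ 2 : ℝ) : ℂ) = trigSum ξ a y * (starRingEnd ℂ) (trigSum ξ a y) := by
    rw [Complex.mul_conj, Complex.normSq_eq_norm_sq]
  rw [Complex.ofReal_mul, h, trigSum, map_sum, Finset.sum_mul_sum, Finset.mul_sum]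
  refine Finset.sum_congr rfl fun j _ => ?_
  rw [Finset.mul_sum]
  refine Finset.sum_congr rfl fun k _ => ?_
  have e : Complex.exp (Complex.I * ((2 * π * (ξ j - ξ k) : ℝ) : ℂ) * y) =
      Complex.exp (2 * (π : ℂ) * Complex.I * (ξ j : ℂ) * (y : ℂ)) *
      (starRingEnd ℂ) (Complex.exp (2 * (π : ℂ) * Complex.I * (ξ k : ℂ) * (y : ℂ))) := by
    have c2 : (starRingEnd ℂ) 2 = 2 := map_ofNat _ 2
    rw [← Complex.exp_conj, ← Complex.exp_add]
    congr 1
    simp [c2]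
    ring
  rw [e]
  push_cast
  simp only [map_mul]
  ring

lemma integrable_gauss_exp (t : ℝ) : Integrable fun y : ℝ =>
    Complex.exp (Complex.I * (t : ℂ) * y) * Complex.exp (-(π : ℂ) * (y : ℂ) ^ 2) := by
  have := integrable_cexp_quadratic (b := (π : ℂ)) (by simpa using Real.pi_pos)
    (Complex.I * (t : ℂ)) 0
  refine this.congr (Filter.Eventually.of_forall fun y => ?_)
  simp only
  rw [← Complex.exp_add]
  congr 1
  ring

lemma integral_gauss_exp (θ : ℝ) : ∫ y : ℝ,
    Complex.exp (Complex.I * ((2 * π * θ : ℝ) : ℂ) * y) * Complex.exp (-(π : ℂ) * (y : ℂ) ^ 2) =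
      ((Real.exp (-π * θ ^ 2) : ℝ) : ℂ) := by
  have hpi : (π : ℂ) ≠ 0 := by exact_mod_cast Real.pi_ne_zero
  rw [fourierIntegral_gaussian (by simpa using Real.pi_pos), div_self hpi, Complex.one_cpow,
    one_mul, Complex.ofReal_exp]
  congr 1
  push_cast
  field_simp
  ring

lemma integrable_gauss_sq_trigSum {N : ℕ} (ξ : Fin N → ℝ) (a : EuclideanSpace ℂ (Fin N)) :
    Integrable fun y : ℝ => Real.exp (-π * y ^ 2) * ‖trigSum ξ a y‖ ^ 2 := by
  have : Integrable fun y : ℝ => ((Real.exp (-π * y ^ 2) * ‖trigSum ξ a y‖ ^ 2 : ℝ) : ℂ) := by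
    simp only [gauss_mul_sq_trigSum]
    exact integrable_finsetSum _ fun j _ => integrable_finsetSum _ fun k _ =>
      (integrable_gauss_exp _).const_mul _
  exact this.re.congr (Filter.Eventually.of_forall fun y => Complex.ofReal_re _)

lemma integral_gauss_sq_trigSum_le {N : ℕ} {δ : ℝ} (hδ : 0 < δ) {ξ : Fin N → ℝ}
    (hξ : ∀ j : Fin N, ∀ h : (j : ℕ) + 1 < N, δ ≤ ξ ⟨(j : ℕ) + 1, h⟩ - ξ j)
    (a : EuclideanSpace ℂ (Fin N)) :
    ∫ y : ℝ, Real.exp (-π * y ^ 2) * ‖trigSum ξ a y‖ ^ 2 ≤ gaussTail δ * ‖a‖ ^ 2 := by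
  have h : ((∫ y : ℝ, Real.exp (-π * y ^ 2) * ‖trigSum ξ a y‖ ^ 2 : ℝ) : ℂ) =
      ∑ j, ∑ k, (a j * (starRingEnd ℂ) (a k)) * ((Real.exp (-π * (ξ j - ξ k) ^ 2) : ℝ) : ℂ) := by
    rw [← integral_complex_ofReal]
    simp only [gauss_mul_sq_trigSum]
    rw [integral_finsetSum _ fun j _ => integrable_finsetSum _ fun k _ =>
      (integrable_gauss_exp _).const_mul _]
    refine Finset.sum_congr rfl fun j _ => ?_
    rw [integral_finsetSum _ fun k _ => (integrable_gauss_exp _).const_mul _]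
    refine Finset.sum_congr rfl fun k _ => ?_
    rw [integral_const_mul, integral_gauss_exp]
  refine le_trans ?_ (gram_form_le hδ hξ a)
  refine (le_abs_self _).trans ?_
  rw [← Real.norm_eq_abs, ← Complex.norm_real, h]
  refine (norm_sum_le _ _).trans (Finset.sum_le_sum fun j _ => ?_)
  refine (norm_sum_le _ _).trans (Finset.sum_le_sum fun k _ => ?_)
  rw [norm_mul, norm_mul, Complex.norm_real, Real.norm_eq_abs, Real.abs_exp, RCLike.norm_conj]

/-- Almost orthogonality of separated exponentials on the unit interval. The indicator of `[0, 1]`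
is dominated by `e^π e^{-πy²}`, whose Fourier transform is explicit and decays rapidly. -/
lemma lintegral_sq_trigSum_le {N : ℕ} {δ : ℝ} (hδ : 0 < δ) {ξ : Fin N → ℝ}
    (hξ : ∀ j : Fin N, ∀ h : (j : ℕ) + 1 < N, δ ≤ ξ ⟨(j : ℕ) + 1, h⟩ - ξ j)
    (a : EuclideanSpace ℂ (Fin N)) :
    ∫⁻ y in Set.Icc (0 : ℝ) 1, ‖trigSum ξ a y‖ₑ ^ (2 : ℝ) ≤
      ENNReal.ofReal (Real.exp π * gaussTail δ * ‖a‖ ^ 2) := by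
  calc ∫⁻ y in Set.Icc (0 : ℝ) 1, ‖trigSum ξ a y‖ₑ ^ (2 : ℝ)
      ≤ ∫⁻ y in Set.Icc (0 : ℝ) 1, ENNReal.ofReal
          (Real.exp π * (Real.exp (-π * y ^ 2) * ‖trigSum ξ a y‖ ^ 2)) := by
        refine setLIntegral_mono' measurableSet_Icc fun y hy => ?_
        rw [← ofReal_norm, ENNReal.ofReal_rpow_of_nonneg (norm_nonneg _) (by norm_num),
          Real.rpow_two]
        refine ENNReal.ofReal_le_ofReal ?_
        rw [← mul_assoc, ← Real.exp_add]
        refine le_mul_of_one_le_left (sq_nonneg _) (Real.one_le_exp ?_)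
        have : y ^ 2 ≤ 1 := by nlinarith [hy.1, hy.2]
        nlinarith [Real.pi_pos]
    _ ≤ ∫⁻ y : ℝ, ENNReal.ofReal
          (Real.exp π * (Real.exp (-π * y ^ 2) * ‖trigSum ξ a y‖ ^ 2)) :=
        setLIntegral_le_lintegral _ _
    _ = ENNReal.ofReal (Real.exp π * ∫ y : ℝ, Real.exp (-π * y ^ 2) * ‖trigSum ξ a y‖ ^ 2) := by
        rw [← integral_const_mul, ofReal_integral_eq_lintegral_ofReal
          ((integrable_gauss_sq_trigSum ξ a).const_mul _)
          (Filter.Eventually.of_forall fun y => by positivity)]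
    _ ≤ _ := by
        refine ENNReal.ofReal_le_ofReal ?_
        rw [mul_assoc]
        exact mul_le_mul_of_nonneg_left (integral_gauss_sq_trigSum_le hδ hξ a) (Real.exp_pos _).le

/-! ### Entropy numbers of sequences of bounded variation -/

/-- A `lam`-separated finite set of values of `g` has at most `1 + (W / lam) ^ r` elements: listing
it in increasing order of the index gives consecutive jumps larger than `lam`. -/
lemma card_le_of_separated {E : Type*} [NormedAddCommGroup E] {r : ℝ} (hr : 0 < r) {g : ℕ → E}
    {W lam : ℝ} (hW : 0 < W) (hlam : 0 < lam) (hg : vSemi r Set.univ g ≤ ENNReal.ofReal W)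
    {s : Finset ℕ} (hs : ∀ i ∈ s, ∀ j ∈ s, i ≠ j → lam < ‖g i - g j‖) :
    (s.card : ℝ) ≤ 1 + (W / lam) ^ r := by
  rcases Nat.eq_zero_or_eq_succ_pred s.card with h0 | h1
  · rw [h0, Nat.cast_zero]; positivity
  set M := s.card.pred
  have hcard : s.card = M + 1 := h1
  let u := s.orderEmbOfFin hcard
  have hle : (∑ j : Fin M, (‖g (u j.succ) - g (u j.castSucc)‖₊ : ℝ≥0∞) ^ r) ^ (1 / r) ≤
      ENNReal.ofReal W := by
    refine le_trans ?_ hg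
    exact le_iSup₂_of_le M (fun i => u i) (le_iSup₂_of_le u.strictMono (fun _ => Set.mem_univ _)
      le_rfl)
  have hsum : (M : ℝ≥0∞) * ENNReal.ofReal lam ^ r ≤
      ∑ j : Fin M, (‖g (u j.succ) - g (u j.castSucc)‖₊ : ℝ≥0∞) ^ r := by
    calc (M : ℝ≥0∞) * ENNReal.ofReal lam ^ r = ∑ _j : Fin M, ENNReal.ofReal lam ^ r := by simp
      _ ≤ _ := by
        refine Finset.sum_le_sum fun j _ => ENNReal.rpow_le_rpow ?_ hr.le
        rw [← enorm_eq_nnnorm, ← ofReal_norm]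
        refine ENNReal.ofReal_le_ofReal (hs _ (Finset.orderEmbOfFin_mem _ _ _) _
          (Finset.orderEmbOfFin_mem _ _ _) ?_).le
        exact (u.strictMono j.castSucc_lt_succ).ne'
  have h2 : (M : ℝ≥0∞) * ENNReal.ofReal lam ^ r ≤ ENNReal.ofReal W ^ r := by
    refine hsum.trans ?_
    rwa [one_div, ENNReal.rpow_inv_le_iff hr] at hle
  rw [ENNReal.ofReal_rpow_of_pos hlam, ENNReal.ofReal_rpow_of_pos hW, ← ENNReal.ofReal_natCast,
    ← ENNReal.ofReal_mul (Nat.cast_nonneg _),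
    ENNReal.ofReal_le_ofReal_iff (Real.rpow_nonneg hW.le _)] at h2
  rw [hcard, Real.div_rpow hW.le hlam.le]
  push_cast
  have : (M : ℝ) ≤ W ^ r / lam ^ r := (le_div_iff₀ (Real.rpow_pos_of_pos hlam r)).2 h2
  linarith

/-- Entropy bound: a maximal `lam`-separated set of values is a `lam`-net. -/
lemma exists_net {E : Type*} [NormedAddCommGroup E] {r : ℝ} (hr : 0 < r) {g : ℕ → E}
    {W lam : ℝ} (hW : 0 < W) (hlam : 0 < lam) (hg : vSemi r Set.univ g ≤ ENNReal.ofReal W) :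
    ∃ s : Finset ℕ, (s.card : ℝ) ≤ 1 + (W / lam) ^ r ∧ ∀ k, ∃ i ∈ s, ‖g k - g i‖ ≤ lam := by
  let P : ℕ → Prop := fun n => ∃ s : Finset ℕ, s.card = n ∧
    ∀ i ∈ s, ∀ j ∈ s, i ≠ j → lam < ‖g i - g j‖
  have hbdd : ∀ n, P n → n ≤ ⌊1 + (W / lam) ^ r⌋₊ := by
    rintro n ⟨s, rfl, hs⟩
    exact Nat.le_floor (card_le_of_separated hr hW hlam hg hs)
  classical
  have h0 : P 0 := ⟨∅, rfl, by simp⟩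
  obtain ⟨s, hcard, hs⟩ : P (Nat.findGreatest P ⌊1 + (W / lam) ^ r⌋₊) :=
    Nat.findGreatest_spec (Nat.zero_le _) h0
  refine ⟨s, card_le_of_separated hr hW hlam hg hs, fun k => ?_⟩
  by_contra! hk
  have hks : k ∉ s := fun h => by
    have := hk k h
    simp at this
    linarith
  have hP : P (s.card + 1) := by
    refine ⟨insert k s, Finset.card_insert_of_notMem hks, fun i hi j hj hij => ?_⟩
    rcases Finset.mem_insert.1 hi with rfl | hi' <;> rcases Finset.mem_insert.1 hj with rfl | hj'
    · exact absurd rfl hij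
    · exact hk j hj'
    · rw [norm_sub_rev]; exact hk i hi'
    · exact hs i hi' j hj' hij
  have := Nat.le_findGreatest (hbdd _ hP) hP
  omega

/-! ### Chaining -/

/-- The `L²([0, 1])` norm of a function with values in `[0, ∞]`. -/
noncomputable def L2norm (F : ℝ → ℝ≥0∞) : ℝ≥0∞ :=
  (∫⁻ y in Set.Icc (0 : ℝ) 1, F y ^ (2 : ℝ)) ^ (1 / 2 : ℝ)

lemma L2norm_mono {F G : ℝ → ℝ≥0∞} (h : ∀ y, F y ≤ G y) : L2norm F ≤ L2norm G :=
  ENNReal.rpow_le_rpow (lintegral_mono fun y => ENNReal.rpow_le_rpow (h y) (by norm_num))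
    (by norm_num)

lemma L2norm_add_le {F G : ℝ → ℝ≥0∞} (hF : Measurable F) (hG : Measurable G) :
    L2norm (fun y => F y + G y) ≤ L2norm F + L2norm G :=
  ENNReal.lintegral_Lp_add_le hF.aemeasurable hG.aemeasurable (by norm_num)

lemma L2norm_const (c : ℝ≥0∞) : L2norm (fun _ => c) = c := by
  simp only [L2norm, lintegral_const, Measure.restrict_apply_univ, Real.volume_Icc, sub_zero,
    ENNReal.ofReal_one, mul_one, ← ENNReal.rpow_mul]
  norm_num

/-- The maximal function `y ↦ sup_{i ∈ s} |∑ j, x i j * e^{2πi ξ_j y}|`. -/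
noncomputable def maxFun {N : ℕ} (ξ : Fin N → ℝ) (s : Finset ℕ)
    (x : ℕ → EuclideanSpace ℂ (Fin N)) (y : ℝ) : ℝ≥0∞ :=
  s.sup fun i => ‖trigSum ξ (x i) y‖ₑ

lemma measurable_maxFun {N : ℕ} (ξ : Fin N → ℝ) (s : Finset ℕ)
    (x : ℕ → EuclideanSpace ℂ (Fin N)) : Measurable (maxFun ξ s x) := by
  have : maxFun ξ s x = fun y => ⨆ i ∈ s, ‖trigSum ξ (x i) y‖ₑ := by
    funext y; simp [maxFun, Finset.sup_eq_iSup]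
  rw [this]
  exact Measurable.iSup fun i => Measurable.iSup fun _ =>
    (continuous_trigSum ξ (x i)).measurable.enorm

/-- Bound for a finite maximal function: replace the supremum by the `ℓ²` sum over `s` and apply
almost orthogonality to each term. -/
lemma L2norm_maxFun_le {N : ℕ} {δ : ℝ} (hδ : 0 < δ) {ξ : Fin N → ℝ}
    (hξ : ∀ j : Fin N, ∀ h : (j : ℕ) + 1 < N, δ ≤ ξ ⟨(j : ℕ) + 1, h⟩ - ξ j)
    (s : Finset ℕ) (x : ℕ → EuclideanSpace ℂ (Fin N)) {lam K : ℝ} (hlam : 0 ≤ lam)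
    (hK : (s.card : ℝ) ≤ K) (hx : ∀ i ∈ s, ‖x i‖ ≤ lam) :
    L2norm (maxFun ξ s x) ≤ ENNReal.ofReal (√(Real.exp π * gaussTail δ) * (√K * lam)) := by
  have hD : 0 ≤ Real.exp π * gaussTail δ := mul_nonneg (Real.exp_pos _).le (gaussTail_nonneg δ)
  have hK0 : 0 ≤ K := (Nat.cast_nonneg _).trans hK
  have h1 : ∫⁻ y in Set.Icc (0 : ℝ) 1, maxFun ξ s x y ^ (2 : ℝ) ≤
      ENNReal.ofReal (Real.exp π * gaussTail δ * (K * lam ^ 2)) := by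
    calc ∫⁻ y in Set.Icc (0 : ℝ) 1, maxFun ξ s x y ^ (2 : ℝ)
        ≤ ∫⁻ y in Set.Icc (0 : ℝ) 1, ∑ i ∈ s, ‖trigSum ξ (x i) y‖ₑ ^ (2 : ℝ) := by
          refine lintegral_mono fun y => ?_
          rcases s.eq_empty_or_nonempty with rfl | hne
          · simp [maxFun]
          obtain ⟨i, hi, he⟩ := s.exists_mem_eq_sup hne fun i => ‖trigSum ξ (x i) y‖ₑ
          simp only [maxFun]
          rw [he]
          exact Finset.single_le_sum (f := fun i => ‖trigSum ξ (x i) y‖ₑ ^ (2 : ℝ))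
            (fun _ _ => zero_le) hi
      _ = ∑ i ∈ s, ∫⁻ y in Set.Icc (0 : ℝ) 1, ‖trigSum ξ (x i) y‖ₑ ^ (2 : ℝ) :=
          lintegral_finsetSum _ fun i _ =>
            (continuous_trigSum ξ (x i)).measurable.enorm.pow_const _
      _ ≤ ∑ _i ∈ s, ENNReal.ofReal (Real.exp π * gaussTail δ * lam ^ 2) := by
          refine Finset.sum_le_sum fun i hi => (lintegral_sq_trigSum_le hδ hξ _).trans ?_
          refine ENNReal.ofReal_le_ofReal (mul_le_mul_of_nonneg_left ?_ hD)
          exact pow_le_pow_left₀ (norm_nonneg _) (hx i hi) 2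
      _ = ENNReal.ofReal (s.card * (Real.exp π * gaussTail δ * lam ^ 2)) := by
          rw [Finset.sum_const, nsmul_eq_mul, ENNReal.ofReal_mul (Nat.cast_nonneg _),
            ENNReal.ofReal_natCast]
      _ ≤ _ := by
          refine ENNReal.ofReal_le_ofReal ?_
          have := mul_le_mul_of_nonneg_right hK (mul_nonneg hD (sq_nonneg lam))
          linarith
  refine (ENNReal.rpow_le_rpow h1 (by norm_num)).trans_eq ?_
  rw [ENNReal.ofReal_rpow_of_nonneg (by positivity) (by norm_num), ← Real.sqrt_eq_rpow,
    Real.sqrt_mul hD, Real.sqrt_mul hK0, Real.sqrt_sq hlam]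

/-- Chaining: the values at scale `2⁻ˢ` have a net whose maximal function is controlled by a
geometric sum with ratio `2 ^ (r / 2 - 1)`. A point of each net is compared with a nearby point of
the preceding, coarser net. -/
lemma exists_net_maxFun_le {N : ℕ} {δ r : ℝ} (hδ : 0 < δ) (hr : 0 < r) {ξ : Fin N → ℝ}
    (hξ : ∀ j : Fin N, ∀ h : (j : ℕ) + 1 < N, δ ≤ ξ ⟨(j : ℕ) + 1, h⟩ - ξ j)
    {g : ℕ → EuclideanSpace ℂ (Fin N)} {W : ℝ} (hW : 0 < W)
    (hsup : ∀ k, ‖g k‖ ≤ W) (hg : vSemi r Set.univ g ≤ ENNReal.ofReal W) (S : ℕ) :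
    ∃ s : Finset ℕ, (∀ k, ∃ i ∈ s, ‖g k - g i‖ ≤ W / 2 ^ S) ∧
      L2norm (maxFun ξ s g) ≤ ENNReal.ofReal (√(Real.exp π * gaussTail δ) * (√2 * 2 * W) *
        ∑ n ∈ Finset.range (S + 1), ((2 : ℝ) ^ (r / 2 - 1)) ^ n) := by
  -- the contribution of a net of scale `2⁻ⁿ`
  have key : ∀ n : ℕ, √(2 * ((2 : ℝ) ^ n) ^ r) * (2 * W / 2 ^ n) =
      √2 * 2 * W * ((2 : ℝ) ^ (r / 2 - 1)) ^ n := by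
    intro n
    rw [Real.sqrt_mul (by norm_num), Real.sqrt_eq_rpow (((2 : ℝ) ^ n) ^ r),
      ← Real.rpow_mul (by positivity), mul_one_div, Real.rpow_pow_comm (by norm_num),
      Real.rpow_sub (by positivity), Real.rpow_one]
    ring
  have hD := Real.sqrt_nonneg (Real.exp π * gaussTail δ)
  have hnet : ∀ n : ℕ, ∃ s : Finset ℕ, (s.card : ℝ) ≤ 2 * ((2 : ℝ) ^ n) ^ r ∧
      ∀ k, ∃ i ∈ s, ‖g k - g i‖ ≤ W / 2 ^ n := by
    intro n
    obtain ⟨s, hc, hs⟩ := exists_net hr (lam := W / 2 ^ n) hW (by positivity) hg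
    refine ⟨s, hc.trans ?_, hs⟩
    rw [div_div_cancel₀ hW.ne']
    have := Real.one_le_rpow (one_le_pow₀ (one_le_two : (1 : ℝ) ≤ 2) (n := n)) hr.le
    linarith
  induction S with
  | zero =>
    obtain ⟨s, hc, hs⟩ := hnet 0
    refine ⟨s, hs, (L2norm_maxFun_le hδ hξ s g (lam := 2 * W / 2 ^ 0) (by positivity) hc
      fun i _ => ?_).trans_eq ?_⟩
    · have := hsup i
      simp only [pow_zero, div_one]
      linarith
    · rw [key]; simp
  | succ S ih =>
    obtain ⟨s, hs, hI⟩ := ih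
    obtain ⟨t, hc, ht⟩ := hnet (S + 1)
    choose p hp hpd using hs
    refine ⟨t, ht, ?_⟩
    have hpt : ∀ y, maxFun ξ t g y ≤ maxFun ξ t (fun i => g i - g (p i)) y + maxFun ξ s g y := by
      intro y
      refine Finset.sup_le fun i hi => ?_
      have e : trigSum ξ (g i) y = trigSum ξ (g i - g (p i)) y + trigSum ξ (g (p i)) y := by
        rw [trigSum_sub]; ring
      rw [e]
      refine (enorm_add_le _ _).trans (add_le_add ?_ ?_)
      · exact Finset.le_sup (f := fun i => ‖trigSum ξ (g i - g (p i)) y‖ₑ) hi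
      · exact Finset.le_sup (f := fun i => ‖trigSum ξ (g i) y‖ₑ) (hp i)
    have h1 := L2norm_maxFun_le hδ hξ t (fun i => g i - g (p i)) (lam := 2 * W / 2 ^ (S + 1))
      (by positivity) hc fun i _ => (hpd i).trans_eq (by rw [pow_succ]; field_simp)
    rw [key] at h1
    refine (L2norm_mono hpt).trans ((L2norm_add_le (measurable_maxFun _ _ _)
      (measurable_maxFun _ _ _)).trans ((add_le_add h1 hI).trans_eq ?_))
    rw [← ENNReal.ofReal_add (by positivity) (by positivity), Finset.sum_range_succ _ (S + 1)]
    congr 1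
    ring

/-- The maximal inequality for a positive real upper bound `W` of both parts of the variation norm.
The chaining stops at the scale `2⁻ˢ` with `2ˢ` comparable to `N ^ (1 / r)`, below which the
pointwise Cauchy–Schwarz bound is at least as good. -/
lemma L2norm_iSup_le {N : ℕ} (hN : 1 ≤ N) {δ r : ℝ} (hδ : 0 < δ) (hr : 2 < r) {ξ : Fin N → ℝ}
    (hξ : ∀ j : Fin N, ∀ h : (j : ℕ) + 1 < N, δ ≤ ξ ⟨(j : ℕ) + 1, h⟩ - ξ j)
    {g : ℕ → EuclideanSpace ℂ (Fin N)} {W : ℝ} (hW : 0 < W)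
    (hsup : ∀ k, ‖g k‖ ≤ W) (hg : vSemi r Set.univ g ≤ ENNReal.ofReal W) :
    L2norm (fun y => ⨆ k, ‖trigSum ξ (g k) y‖ₑ) ≤
      ENNReal.ofReal ((2 + √(Real.exp π * gaussTail δ) * (√2 * 2) *
        ((2 : ℝ) ^ (r / 2 - 1) / ((2 : ℝ) ^ (r / 2 - 1) - 1))) * (N : ℝ) ^ (1 / 2 - 1 / r) * W) := by
  have hr0 : 0 < r := by linarith
  have hN1 : (1 : ℝ) ≤ N := by exact_mod_cast hN
  have hN0 : (0 : ℝ) < N := by linarith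
  have hrho : 1 < (2 : ℝ) ^ (r / 2 - 1) := Real.one_lt_rpow (by norm_num) (by linarith)
  obtain ⟨S, hS1, hS2⟩ := exists_nat_pow_near
    (Real.one_le_rpow hN1 (by positivity : (0 : ℝ) ≤ 1 / r)) (one_lt_two : (1 : ℝ) < 2)
  obtain ⟨s, hs, hI⟩ := exists_net_maxFun_le hδ hr0 hξ hW hsup hg S
  have hpt : ∀ y, (⨆ k, ‖trigSum ξ (g k) y‖ₑ) ≤
      ENNReal.ofReal (√N * (W / 2 ^ S)) + maxFun ξ s g y := by
    intro y
    refine iSup_le fun k => ?_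
    obtain ⟨i, hi, hd⟩ := hs k
    have e : trigSum ξ (g k) y = trigSum ξ (g k - g i) y + trigSum ξ (g i) y := by
      rw [trigSum_sub]; ring
    rw [e]
    refine (enorm_add_le _ _).trans (add_le_add ?_ ?_)
    · rw [← ofReal_norm]
      exact ENNReal.ofReal_le_ofReal ((norm_trigSum_le _ _ _).trans
        (mul_le_mul_of_nonneg_left hd (Real.sqrt_nonneg _)))
    · exact Finset.le_sup (f := fun i => ‖trigSum ξ (g i) y‖ₑ) hi
  have hD := Real.sqrt_nonneg (Real.exp π * gaussTail δ)
  refine (L2norm_mono hpt).trans ((L2norm_add_le measurable_const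
    (measurable_maxFun _ _ _)).trans ?_)
  rw [L2norm_const]
  refine (add_le_add_right hI _).trans ?_
  rw [← ENNReal.ofReal_add (by positivity) (by positivity)]
  refine ENNReal.ofReal_le_ofReal ?_
  have hfine : √N * (W / 2 ^ S) ≤ 2 * (N : ℝ) ^ (1 / 2 - 1 / r) * W := by
    rw [Real.rpow_sub hN0, ← Real.sqrt_eq_rpow]
    have hp : (0 : ℝ) < (N : ℝ) ^ (1 / r) := by positivity
    have : 1 / (2 : ℝ) ^ S ≤ 2 / (N : ℝ) ^ (1 / r) := by
      rw [div_le_div_iff₀ (by positivity) hp]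
      rw [pow_succ] at hS2
      linarith
    calc √N * (W / 2 ^ S) = √N * W * (1 / 2 ^ S) := by ring
      _ ≤ √N * W * (2 / (N : ℝ) ^ (1 / r)) := by gcongr
      _ = _ := by ring
  have hgeom : ∑ n ∈ Finset.range (S + 1), ((2 : ℝ) ^ (r / 2 - 1)) ^ n ≤
      ((2 : ℝ) ^ (r / 2 - 1) / ((2 : ℝ) ^ (r / 2 - 1) - 1)) * (N : ℝ) ^ (1 / 2 - 1 / r) := by
    have h1 : ((2 : ℝ) ^ (r / 2 - 1)) ^ S ≤ (N : ℝ) ^ (1 / 2 - 1 / r) := by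
      calc ((2 : ℝ) ^ (r / 2 - 1)) ^ S = ((2 : ℝ) ^ S) ^ (r / 2 - 1) := by
            rw [← Real.rpow_natCast, ← Real.rpow_natCast, ← Real.rpow_mul (by norm_num),
              ← Real.rpow_mul (by norm_num), mul_comm]
        _ ≤ ((N : ℝ) ^ (1 / r)) ^ (r / 2 - 1) :=
            Real.rpow_le_rpow (by positivity) hS1 (by linarith)
        _ = _ := by
            rw [← Real.rpow_mul hN0.le]
            congr 1
            field_simp
    rw [geom_sum_eq hrho.ne', div_mul_eq_mul_div]
    refine div_le_div_of_nonneg_right ?_ (by linarith)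
    rw [pow_succ, mul_comm]
    have := mul_le_mul_of_nonneg_left h1 (by linarith : (0 : ℝ) ≤ (2 : ℝ) ^ (r / 2 - 1))
    linarith
  have hgeom' := mul_le_mul_of_nonneg_left hgeom
    (by positivity : 0 ≤ √(Real.exp π * gaussTail δ) * (√2 * 2 * W))
  refine (add_le_add hfine hgeom').trans_eq ?_
  ring

/-! ### The maximal inequality -/

/-- Bourgain's multi-frequency maximal inequality (Lemma 3): for `r > 2` and frequencies
separated by at least `δ`,
`‖ sup_k |∑_j c_{k,j} e^{2πi ξ_j y}| ‖_{L²_y([0,1])} ≤ C N^{1/2 - 1/r} ‖c_k‖_{V^r_k(ℓ²)}`. -/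
theorem bourgain_maximal (r δ : ℝ) (hr : 2 < r) (hδ : 0 < δ) :
    ∃ C : ℝ≥0, ∀ (N : ℕ), 1 ≤ N → ∀ ξ : Fin N → ℝ, StrictMono ξ →
      (∀ j : Fin N, ∀ h : (j : ℕ) + 1 < N, δ ≤ ξ ⟨(j : ℕ) + 1, h⟩ - ξ j) →
      ∀ c : ℕ → Fin N → ℂ,
      (∫⁻ y in Set.Icc (0:ℝ) 1,
          (⨆ k : ℕ, (‖∑ j, c k j *
            Complex.exp (2 * (π : ℂ) * Complex.I * (ξ j : ℂ) * (y : ℂ))‖₊ : ℝ≥0∞)) ^ (2:ℝ))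
          ^ (1/2 : ℝ)
        ≤ C * (N : ℝ≥0∞) ^ (1/2 - 1/r) *
          vNorm r Set.univ
            (fun k => (WithLp.equiv 2 (Fin N → ℂ)).symm (c k) : ℕ → EuclideanSpace ℂ (Fin N)) := by
  have hrho : 1 < (2 : ℝ) ^ (r / 2 - 1) := Real.one_lt_rpow (by norm_num) (by linarith)
  have hD := Real.sqrt_nonneg (Real.exp π * gaussTail δ)
  set A : ℝ := 2 + √(Real.exp π * gaussTail δ) * (√2 * 2) *
        ((2 : ℝ) ^ (r / 2 - 1) / ((2 : ℝ) ^ (r / 2 - 1) - 1)) with hA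
  have hA0 : 0 < A := by
    have : 0 < (2 : ℝ) ^ (r / 2 - 1) - 1 := by linarith
    positivity
  refine ⟨A.toNNReal, fun N hN ξ _ hξ c => ?_⟩
  set g : ℕ → EuclideanSpace ℂ (Fin N) := fun k => (WithLp.equiv 2 (Fin N → ℂ)).symm (c k) with hgdef
  change L2norm (fun y => ⨆ k, ‖trigSum ξ (g k) y‖ₑ) ≤ ENNReal.ofReal A * _ * vNorm r Set.univ g
  have hN0 : (0 : ℝ) < N := by exact_mod_cast hN
  have hNp : (N : ℝ≥0∞) ^ (1 / 2 - 1 / r) = ENNReal.ofReal ((N : ℝ) ^ (1 / 2 - 1 / r)) := by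
    rw [← ENNReal.ofReal_rpow_of_pos hN0, ENNReal.ofReal_natCast]
  rw [hNp]
  have hNpos : 0 < (N : ℝ) ^ (1 / 2 - 1 / r) := by positivity
  have hsup : ∀ k, ‖g k‖ₑ ≤ vNorm r Set.univ g := fun k =>
    le_add_right (le_iSup₂_of_le k (Set.mem_univ k) le_rfl)
  rcases eq_or_ne (vNorm r Set.univ g) ⊤ with htop | htop
  · rw [htop, ENNReal.mul_top]
    · exact le_top
    · exact mul_ne_zero (ENNReal.ofReal_pos.2 hA0).ne' (ENNReal.ofReal_pos.2 hNpos).ne'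
  rcases eq_or_ne (vNorm r Set.univ g) 0 with h0 | h0
  · have hz : ∀ k, g k = 0 := fun k => by
      have := hsup k
      rw [h0] at this
      simpa using this
    have hz' : (fun y => ⨆ k, ‖trigSum ξ (g k) y‖ₑ) = fun _ => 0 := by
      funext y
      simp [hz, trigSum]
    rw [hz', L2norm_const]
    exact zero_le
  have hW : ENNReal.ofReal (vNorm r Set.univ g).toReal = vNorm r Set.univ g :=
    ENNReal.ofReal_toReal htop
  refine (L2norm_iSup_le hN hδ hr hξ (ENNReal.toReal_pos h0 htop) (fun k => ?_) ?_).trans_eq ?_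
  · rw [← toReal_enorm]
    exact ENNReal.toReal_mono htop (hsup k)
  · rw [hW]
    exact le_add_self
  · rw [ENNReal.ofReal_mul (by positivity), ENNReal.ofReal_mul hA0.le, hW]
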